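/- arXiv:0705.3065 — 2 statements merged into one kernel-verified Lean document; each statement's English description precedes it below -/
import Mathlib

section
/- For every integer r ≥ 1, every b ∈ {0,1}, and all natural numbers n ≥ m ≥ 0, the number of Dyck-type paths from (0,0) to (2n+b, 2m+b) staying weakly above the x-axis and containing no r consecutive down-steps, multiplied by n+m+b+1, equals (2m+b+1) · ⟨n+m+b+1 choose n-m⟩_r. -/
/-- `dyckCount r a b` is the number of lattice paths from `(0,0)` to `(a+b, a-b)`
(encoded as words in `true` = up-step `(1,1)` and `false` = down-step `(1,-1)`,
with `a` up-steps and `b` down-steps) that stay weakly above the `x`-axis and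
contain no `r` consecutive down-steps. -/
noncomputable def dyckCount (r a b : ℕ) : ℕ :=
  Set.ncard {p : List Bool |
    p.count true = a ∧ p.count false = b ∧
    (∀ q : List Bool, q <+: p → q.count false ≤ q.count true) ∧
    ¬ List.replicate r false <:+: p}

/-- The Euler coefficient `⟨n choose k⟩_r`: the coefficient of `t^k` in the
polynomial `(1 + t + t^2 + ⋯ + t^(r-1))^n`, viewed as an integer. -/
noncomputable def eulerCoeff (r n k : ℕ) : ℤ :=
  ((∑ i ∈ Finset.range r, (Polynomial.X : Polynomial ℤ) ^ i) ^ n).coeff k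

/-! A path with `a + 1` up-steps is a path with `a` up-steps followed by an up-step and a final run
of fewer than `r` down-steps. With `P = 1 + t + ⋯ + t^(r-1)` this gives
`D (a + 1) k = ∑ i + j = k, [t^i] P * D a j` for the number `D a k` of paths with `a` up-steps and
`k ≤ a` down-steps. The formula `D a k = [t^k] P^a (P - t P')` satisfies the same recursion, and
`(a + 1) [t^k] P^a (P - t P') = (a + 1 - k) [t^k] P^(a + 1)`; in particular it vanishes at
`k = a + 1`, which is the boundary condition imposed by the axis. -/

open Finset

theorem ncard_biUnion_finset {ι α : Type*} {t : Finset ι} {s : ι → Set α}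
    (hs : ∀ i ∈ t, (s i).Finite) (disjoint : (t : Set ι).PairwiseDisjoint s) :
    (⋃ i ∈ t, s i).ncard = ∑ i ∈ t, (s i).ncard := by
  rw [← finsum_mem_coe_finset]
  exact t.finite_toSet.ncard_biUnion hs disjoint

section BallotRecursion

open PowerSeries

variable {R : Type*} [CommRing R]

theorem coeff_X_mul_derivative (f : R⟦X⟧) (k : ℕ) :
    coeff k (X * derivative R f) = k * coeff k f := by
  cases k with
  | zero => simp
  | succ k => rw [coeff_succ_X_mul, coeff_derivative, mul_comm, Nat.cast_succ]

theorem succ_mul_coeff_pow_mul_sub_X_mul_derivative (P : R⟦X⟧) (n k : ℕ) :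
    (n + 1 : R) * coeff k (P ^ n * (P - X * derivative R P)) =
      (n + 1 - k) * coeff k (P ^ (n + 1)) := by
  have euler : ((n + 1 : ℕ) : R⟦X⟧) * (P ^ n * (P - X * derivative R P)) =
      ((n + 1 : ℕ) : R⟦X⟧) * P ^ (n + 1) - X * derivative R (P ^ (n + 1)) := by
    rw [derivative_pow, Nat.add_sub_cancel]
    ring
  have euler_coeff := congrArg (coeff k) euler
  simp only [← nsmul_eq_mul, map_sub, map_nsmul, coeff_X_mul_derivative] at euler_coeff
  simp only [nsmul_eq_mul, Nat.cast_succ] at euler_coeff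
  rw [euler_coeff, sub_mul]

theorem coeff_succ_pow_mul_sub_X_mul_derivative [IsAddTorsionFree R] (P : R⟦X⟧) (n : ℕ) :
    coeff (n + 1) (P ^ n * (P - X * derivative R P)) = 0 := by
  have h := succ_mul_coeff_pow_mul_sub_X_mul_derivative P n (n + 1)
  rw [Nat.cast_succ, sub_self, zero_mul, ← Nat.cast_succ, ← nsmul_eq_mul] at h
  exact (nsmul_eq_zero_iff_right n.succ_ne_zero).mp h

theorem eq_coeff_of_ballot_recursion [IsAddTorsionFree R] {P : R⟦X⟧} {D : ℕ → ℕ → R}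
    (zero_zero : D 0 0 = constantCoeff P) (boundary : ∀ a, D a (a + 1) = 0)
    (recursion : ∀ a, ∀ k ≤ a + 1,
      D (a + 1) k = ∑ x ∈ antidiagonal k, coeff x.1 P * D a x.2) (a : ℕ) :
    ∀ k ≤ a + 1, D a k = coeff k (P ^ a * (P - X * derivative R P)) := by
  have on_boundary (a : ℕ) :
      D a (a + 1) = coeff (a + 1) (P ^ a * (P - X * derivative R P)) := by
    rw [boundary, coeff_succ_pow_mul_sub_X_mul_derivative]
  induction a with
  | zero =>
    intro k hk
    obtain rfl | rfl : k = 0 ∨ k = 0 + 1 := by lia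
    · simp [zero_zero]
    · exact on_boundary 0
  | succ a ih =>
    intro k hk
    obtain hk | rfl : k ≤ a + 1 ∨ k = a + 1 + 1 := by lia
    · rw [recursion a k hk, pow_succ', mul_assoc, coeff_mul]
      refine sum_congr rfl fun x hx ↦ ?_
      rw [ih x.2 (by grind [HasAntidiagonal.mem_antidiagonal])]
    · exact on_boundary (a + 1)

end BallotRecursion

section FinalRun

variable {α : Type*} {x y : α}

theorem replicate_prefix_replicate_append_cons_iff (hxy : x ≠ y) (r j : ℕ) (l : List α) :
    List.replicate r y <+: List.replicate j y ++ x :: l ↔ r ≤ j := by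
  induction j generalizing r with
  | zero => cases r <;> simp [List.replicate_succ, hxy.symm]
  | succ j ih => cases r <;> simp [List.replicate_succ, ih]

theorem replicate_suffix_append_cons_replicate_iff (hxy : x ≠ y) (r j : ℕ) (l : List α) :
    List.replicate r y <:+ l ++ x :: List.replicate j y ↔ r ≤ j := by
  rw [← List.reverse_prefix]
  simpa using replicate_prefix_replicate_append_cons_iff hxy r j l.reverse

theorem append_cons_replicate_succ (l : List α) (j : ℕ) :
    l ++ x :: List.replicate (j + 1) y = (l ++ x :: List.replicate j y) ++ [y] := by
  simp [List.replicate_succ']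

theorem replicate_infix_append_cons_replicate_iff (hxy : x ≠ y) (r j : ℕ) (l : List α) :
    List.replicate r y <:+: l ++ x :: List.replicate j y ↔
      List.replicate r y <:+: l ∨ r ≤ j := by
  induction j with
  | zero =>
    have suffix_iff := replicate_suffix_append_cons_replicate_iff hxy r 0 l
    rw [List.replicate_zero] at suffix_iff ⊢
    rw [List.infix_concat_iff, suffix_iff, or_comm]
  | succ j ih =>
    have suffix_iff := replicate_suffix_append_cons_replicate_iff hxy r (j + 1) l
    rw [append_cons_replicate_succ] at suffix_iff ⊢
    rw [List.infix_concat_iff, suffix_iff, ih]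
    lia

theorem append_cons_replicate_inj (hxy : x ≠ y) {i j : ℕ} {l l' : List α} :
    l ++ x :: List.replicate i y = l' ++ x :: List.replicate j y ↔ l = l' ∧ i = j := by
  refine ⟨fun h ↦ ?_, by rintro ⟨rfl, rfl⟩; rfl⟩
  obtain rfl : i = j := eq_of_forall_le_iff fun r ↦ by
    rw [← replicate_suffix_append_cons_replicate_iff hxy r i l, h,
      replicate_suffix_append_cons_replicate_iff hxy]
  exact ⟨List.append_cancel_right h, rfl⟩

end FinalRun

theorem exists_eq_append_true_cons_replicate_false {p : List Bool} (hp : true ∈ p) :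
    ∃ q j, p = q ++ true :: List.replicate j false := by
  obtain ⟨s, t, reverse_eq, true_notMem⟩ := List.eq_append_cons_of_mem (List.mem_reverse.mpr hp)
  have s_reverse_eq : s.reverse = List.replicate s.length false := by
    rw [List.eq_replicate_iff]
    exact ⟨List.length_reverse,
      fun c hc ↦ Bool.eq_false_iff.mpr fun h ↦ true_notMem (h ▸ List.mem_reverse.mp hc)⟩
  refine ⟨t.reverse, s.length, ?_⟩
  rw [← s_reverse_eq, ← List.reverse_reverse p, reverse_eq]
  simp

/-- Words, with `true` for an up-step and `false` for a down-step, whose lattice path from the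
origin stays weakly above the `x`-axis: no prefix has more down-steps than up-steps. -/
def StaysAboveAxis (p : List Bool) : Prop :=
  ∀ q : List Bool, q <+: p → q.count false ≤ q.count true

theorem staysAboveAxis_nil : StaysAboveAxis [] := by
  simp [StaysAboveAxis]

theorem staysAboveAxis_concat_iff (p : List Bool) (c : Bool) :
    StaysAboveAxis (p ++ [c]) ↔
      StaysAboveAxis p ∧ (p ++ [c]).count false ≤ (p ++ [c]).count true := by
  simp only [StaysAboveAxis, List.prefix_concat_iff, or_imp, forall_and, forall_eq, and_comm]

theorem staysAboveAxis_append_true_cons_replicate_false_iff (q : List Bool) (j : ℕ) :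
    StaysAboveAxis (q ++ true :: List.replicate j false) ↔
      StaysAboveAxis q ∧ q.count false + j ≤ q.count true + 1 := by
  induction j with
  | zero =>
    rw [List.replicate_zero, staysAboveAxis_concat_iff]
    simp
  | succ j ih =>
    rw [append_cons_replicate_succ, staysAboveAxis_concat_iff, ih]
    have counts : ((q ++ true :: List.replicate j false) ++ [false]).count false ≤
        ((q ++ true :: List.replicate j false) ++ [false]).count true ↔
          q.count false + (j + 1) ≤ q.count true + 1 := by
      simp [List.count_replicate]
    rw [counts]
    lia

/-- The set of paths counted by `dyckCount r a b`, as words in `true` (up) and `false` (down). -/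
def dyckPaths (r a b : ℕ) : Set (List Bool) :=
  {p | p.count true = a ∧ p.count false = b ∧ StaysAboveAxis p ∧
    ¬ List.replicate r false <:+: p}

theorem dyckCount_eq_ncard (r a b : ℕ) : dyckCount r a b = (dyckPaths r a b).ncard :=
  rfl

theorem dyckPaths_finite (r a b : ℕ) : (dyckPaths r a b).Finite := by
  refine (List.finite_length_eq Bool (a + b)).subset ?_
  rintro p ⟨rfl, rfl, -, -⟩
  exact (List.count_true_add_count_false p).symm

theorem dyckPaths_zero_zero {r : ℕ} (hr : 1 ≤ r) : dyckPaths r 0 0 = {[]} := by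
  ext p
  constructor
  · rintro ⟨no_up, no_down, -, -⟩
    rw [Set.mem_singleton_iff, ← List.length_eq_zero_iff, ← List.count_true_add_count_false,
      no_up, no_down]
  · rintro rfl
    exact ⟨rfl, rfl, staysAboveAxis_nil, by simpa using Nat.ne_of_gt hr⟩

theorem dyckPaths_eq_empty_of_lt (r : ℕ) {a b : ℕ} (hab : a < b) : dyckPaths r a b = ∅ := by
  refine Set.eq_empty_of_forall_notMem ?_
  rintro p ⟨rfl, rfl, above, -⟩
  exact hab.not_ge (above p List.prefix_rfl)

theorem append_true_cons_replicate_false_mem_dyckPaths_iff {r a k : ℕ} (hk : k ≤ a + 1)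
    (q : List Bool) (j : ℕ) :
    q ++ true :: List.replicate j false ∈ dyckPaths r (a + 1) k ↔
      j < r ∧ ∃ i, j + i = k ∧ q ∈ dyckPaths r a i := by
  have count_true : (q ++ true :: List.replicate j false).count true = q.count true + 1 := by
    simp [List.count_replicate]
  have count_false : (q ++ true :: List.replicate j false).count false = q.count false + j := by
    simp
  simp only [dyckPaths, Set.mem_ofPred_eq, count_true, count_false,
    staysAboveAxis_append_true_cons_replicate_false_iff,
    replicate_infix_append_cons_replicate_iff Bool.false_ne_true.symm]
  lia

theorem dyckPaths_succ {r a k : ℕ} (hk : k ≤ a + 1) :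
    dyckPaths r (a + 1) k =
      ⋃ x ∈ (antidiagonal k).filter (fun x ↦ x.1 < r),
        (fun q ↦ q ++ true :: List.replicate x.1 false) '' dyckPaths r a x.2 := by
  ext p
  simp only [Set.mem_iUnion, Set.mem_image, mem_filter, HasAntidiagonal.mem_antidiagonal,
    exists_prop]
  constructor
  · intro hp
    have has_up : true ∈ p := List.count_pos_iff.mp (hp.1 ▸ a.succ_pos)
    obtain ⟨q, j, rfl⟩ := exists_eq_append_true_cons_replicate_false has_up
    obtain ⟨hj, i, hji, hq⟩ :=
      (append_true_cons_replicate_false_mem_dyckPaths_iff hk q j).mp hp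
    exact ⟨(j, i), ⟨hji, hj⟩, q, hq, rfl⟩
  · rintro ⟨⟨j, i⟩, ⟨hji, hj⟩, q, hq, rfl⟩
    exact (append_true_cons_replicate_false_mem_dyckPaths_iff hk q j).mpr ⟨hj, i, hji, hq⟩

theorem dyckCount_succ {r a k : ℕ} (hk : k ≤ a + 1) :
    dyckCount r (a + 1) k = ∑ x ∈ antidiagonal k with x.1 < r, dyckCount r a x.2 := by
  have disjoint_runs : (↑((antidiagonal k).filter fun x ↦ x.1 < r) : Set (ℕ × ℕ)).PairwiseDisjoint
      fun x ↦ (fun q ↦ q ++ true :: List.replicate x.1 false) '' dyckPaths r a x.2 := by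
    intro x hx x' hx' hne
    refine Set.disjoint_left.mpr ?_
    rintro _ ⟨q, -, rfl⟩ ⟨q', -, h⟩
    have run_eq := ((append_cons_replicate_inj Bool.false_ne_true.symm).mp h).2
    grind [HasAntidiagonal.mem_antidiagonal]
  rw [dyckCount_eq_ncard, dyckPaths_succ hk,
    ncard_biUnion_finset (fun x _ ↦ (dyckPaths_finite r a x.2).image _) disjoint_runs]
  refine sum_congr rfl fun x _ ↦ Set.ncard_image_of_injective _ fun q q' h ↦ ?_
  exact ((append_cons_replicate_inj Bool.false_ne_true.symm).mp h).1

/-- The generating series `1 + t + ⋯ + t^(r-1)` of the lengths of the admissible down-runs: the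
polynomial in `eulerCoeff`, cast to a power series to match `eq_coeff_of_ballot_recursion`. -/
noncomputable def runSeries (r : ℕ) : PowerSeries ℤ :=
  ((∑ i ∈ range r, (Polynomial.X : Polynomial ℤ) ^ i : Polynomial ℤ) : PowerSeries ℤ)

theorem coeff_runSeries (r k : ℕ) :
    PowerSeries.coeff k (runSeries r) = if k < r then 1 else 0 := by
  simp [runSeries, Polynomial.coeff_X_pow]

theorem eulerCoeff_eq_coeff_runSeries_pow (r n k : ℕ) :
    eulerCoeff r n k = PowerSeries.coeff k (runSeries r ^ n) := by
  rw [eulerCoeff, runSeries, ← Polynomial.coe_pow, Polynomial.coeff_coe]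

open PowerSeries in
theorem dyckCount_eq_coeff {r : ℕ} (hr : 1 ≤ r) {a k : ℕ} (hk : k ≤ a + 1) :
    (dyckCount r a k : ℤ) =
      coeff k (runSeries r ^ a * (runSeries r - X * derivative ℤ (runSeries r))) := by
  refine eq_coeff_of_ballot_recursion (D := fun a k ↦ (dyckCount r a k : ℤ)) ?_ ?_ ?_ a k hk
  · rw [← coeff_zero_eq_constantCoeff_apply, coeff_runSeries, if_pos (Nat.lt_of_succ_le hr),
      dyckCount_eq_ncard, dyckPaths_zero_zero hr, Set.ncard_singleton, Nat.cast_one]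
  · intro a
    rw [dyckCount_eq_ncard, dyckPaths_eq_empty_of_lt r a.lt_succ_self, Set.ncard_empty,
      Nat.cast_zero]
  · intro a k hk
    simp [dyckCount_succ hk, coeff_runSeries, sum_filter]

theorem dyck_avoiding_down_runs_general_general {r : ℕ} (hr : 1 ≤ r) {a k : ℕ}
    (hk : k ≤ a + 1) :
    ((a : ℤ) + 1) * dyckCount r a k = (a + 1 - k) * eulerCoeff r (a + 1) k := by
  rw [dyckCount_eq_coeff hr hk, eulerCoeff_eq_coeff_runSeries_pow,
    succ_mul_coeff_pow_mul_sub_X_mul_derivative]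

/-- The number of Dyck-type paths from `(0,0)` to `(2n+b, 2m+b)` (so with
`n+m+b` up-steps and `n-m` down-steps) staying weakly above the `x`-axis with no
`r` consecutive down-steps, multiplied by `n+m+b+1`, equals
`(2m+b+1) ⟨n+m+b+1 choose n-m⟩_r`. -/
theorem dyck_avoiding_down_runs_general (r : ℕ) (hr : 1 ≤ r) (b : ℕ) (hb : b ≤ 1)
    (n m : ℕ) (h : m ≤ n) :
    ((n : ℤ) + m + b + 1) * dyckCount r (n + m + b) (n - m) =
      (2 * (m : ℤ) + b + 1) * eulerCoeff r (n + m + b + 1) (n - m) := by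
  have endpoint :=
    dyck_avoiding_down_runs_general_general hr (a := n + m + b) (k := n - m) (by lia)
  push_cast [h] at endpoint
  linear_combination endpoint
end

section
/- For every integer r ≥ 1 and every natural number n ≥ 1: the number of ballot paths to (n,n) containing no r consecutive N-steps equals the number of ballot paths to (n,n) containing no r consecutive E-steps, and (n+1) times this common value equals the Euler coefficient ⟨n+1 choose n⟩_r. Moreover t_n(n;r) = t_{n-1}(n;r). -/
/-- A word in steps `N = true` (up, `(0,1)`) and `E = false` (right, `(1,0)`) is a
ballot word when every prefix has at least as many `N`-steps as `E`-steps,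
i.e. the corresponding lattice path from `(0,0)` stays weakly above `y = x`. -/
def IsBallot (p : List Bool) : Prop :=
  ∀ q : List Bool, q <+: p → q.count false ≤ q.count true

/-- `tCount r n m` is the number of ballot paths from `(0,0)` to `(n,m)`
(with `n` east-steps and `m` north-steps, staying weakly above `y = x`)
containing no `r` consecutive north-steps. -/
noncomputable def tCount (r n m : ℕ) : ℕ :=
  Set.ncard {p : List Bool |
    p.count false = n ∧ p.count true = m ∧ IsBallot p ∧ ¬ List.replicate r true <:+: p}

/-- `sCount r n m` is the number of ballot paths from `(0,0)` to `(n,m)`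
containing no `r` consecutive east-steps. -/
noncomputable def sCount (r n m : ℕ) : ℕ :=
  Set.ncard {p : List Bool |
    p.count false = n ∧ p.count true = m ∧ IsBallot p ∧ ¬ List.replicate r false <:+: p}

/-!
Erasing the last north step of a word together with the run `E^i` that follows it gives, for
`n ≤ m + 1`, the recursion `s_n(m + 1; r) = ∑_{i < r, i ≤ n} s_{n - i}(m; r)`: once the shorter
word is a ballot word, the only remaining condition is that the endpoint lies weakly above the
diagonal. With `P = 1 + t + ⋯ + t^(r - 1)`, this truncated convolution is solved by
`(m + 1) s_n(m; r) = (m + 1 - n) [t^n] P^(m + 1)`, because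
`(k + 1) P · t (P^k)' = k · t (P^(k + 1))'`. Reading a path backwards with the steps swapped turns
`s_n(n; r)` into `t_n(n; r)`.
-/

open Finset.HasAntidiagonal (antidiagonal mem_antidiagonal)

section TruncatedConvolution

open PowerSeries

variable {R : Type*} [CommRing R]

lemma succ_mul_sum_antidiagonal_coeff_mul_coeff_pow (P : R⟦X⟧) (k n : ℕ) :
    ((k : R) + 1) * ∑ ij ∈ antidiagonal n, coeff ij.1 P * (ij.2 * coeff ij.2 (P ^ k)) =
      k * (n * coeff n (P ^ (k + 1))) := by
  have coeff_X_mul_derivative (Q : R⟦X⟧) (j : ℕ) :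
      coeff j (X * d⁄dX R Q) = j * coeff j Q := by
    cases j with
    | zero => simp
    | succ j => rw [coeff_succ_X_mul, coeff_derivative, Nat.cast_succ, mul_comm]
  have euler_pow : ((k : R⟦X⟧) + 1) * (P * (X * d⁄dX R (P ^ k))) =
      (k : R⟦X⟧) * (X * d⁄dX R (P ^ (k + 1))) := by
    cases k with
    | zero => simp
    | succ k =>
      simp only [derivative_pow, Nat.add_sub_cancel]
      push_cast
      ring
  have := congrArg (coeff n) euler_pow
  simpa only [← Nat.cast_succ, ← nsmul_eq_mul, map_nsmul, coeff_mul, coeff_X_mul_derivative]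
    using this

theorem succ_mul_eq_sub_mul_coeff_pow_succ [IsAddTorsionFree R] (P : R⟦X⟧) (s : ℕ → ℕ → R)
    (s_zero_zero : s 0 0 = coeff 0 P) (s_diag : ∀ m, s (m + 1) m = 0)
    (s_succ : ∀ n m, n ≤ m + 1 →
      s n (m + 1) = ∑ ij ∈ antidiagonal n, coeff ij.1 P * s ij.2 m)
    {n m : ℕ} (hnm : n ≤ m + 1) :
    ((m : R) + 1) * s n m = (m + 1 - n) * coeff n (P ^ (m + 1)) := by
  induction m generalizing n with
  | zero =>
    obtain rfl | rfl : n = 0 ∨ n = 1 := by omega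
    · simp [s_zero_zero]
    · simp [s_diag]
  | succ m ih =>
    obtain rfl | hn := hnm.eq_or_lt
    · simp [s_diag]
    have hn' : n ≤ m + 1 := by omega
    have convolution : ((m : R) + 1) * s n (m + 1) =
        (m + 1) * coeff n (P ^ (m + 2)) -
          ∑ ij ∈ antidiagonal n, coeff ij.1 P * (ij.2 * coeff ij.2 (P ^ (m + 1))) := by
      rw [s_succ n m hn', pow_succ' P (m + 1), coeff_mul, Finset.mul_sum, Finset.mul_sum,
        ← Finset.sum_sub_distrib]
      refine Finset.sum_congr rfl fun ij hij => ?_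
      have hj : ij.2 ≤ m + 1 := by
        have := mem_antidiagonal.1 hij
        omega
      linear_combination coeff ij.1 P * ih hj
    have euler := succ_mul_sum_antidiagonal_coeff_mul_coeff_pow P (m + 1) n
    refine nsmul_right_injective (Nat.succ_ne_zero m) ?_
    simp only [nsmul_eq_mul]
    push_cast at euler ⊢
    linear_combination ((m : R) + 2) * convolution - euler

end TruncatedConvolution

lemma coeff_sum_range_X_pow {R : Type*} [Semiring R] (r k : ℕ) :
    (∑ i ∈ Finset.range r, (Polynomial.X : Polynomial R) ^ i).coeff k = if k < r then 1 else 0 := by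
  simp [Polynomial.finsetSum_coeff, Polynomial.coeff_X_pow]

lemma replicate_infix_append_cons_iff {α : Type*} {a b : α} (hab : a ≠ b) {r : ℕ} {l₁ l₂ : List α} :
    List.replicate r a <:+: l₁ ++ b :: l₂ ↔
      List.replicate r a <:+: l₁ ∨ List.replicate r a <:+: l₂ := by
  have eq_nil_of_prefix {t : List α} (ht : t <+: b :: l₂) (hb : b ∉ t) : t = [] := by
    obtain rfl | ⟨t', rfl, -⟩ := List.prefix_cons_iff.1 ht
    · rfl
    · exact absurd List.mem_cons_self hb
  have b_notMem : b ∉ List.replicate r a := fun hb => hab (List.eq_of_mem_replicate hb).symm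
  constructor
  · intro h
    obtain h | h | ⟨s, t, hst, hs, ht⟩ := List.infix_append_iff.1 h
    · exact .inl h
    · obtain h | h := List.infix_cons_iff.1 h
      · exact .inl (eq_nil_of_prefix h b_notMem ▸ List.nil_infix)
      · exact .inr h
    · rw [hst] at b_notMem
      obtain rfl := eq_nil_of_prefix ht fun hb => b_notMem (List.mem_append_right s hb)
      exact .inl (by simpa [hst] using hs.isInfix)
  · rintro (h | h)
    · exact h.trans (List.prefix_append _ _).isInfix
    · exact h.trans ((List.suffix_cons _ _).trans (List.suffix_append _ _)).isInfix

lemma eq_append_cons_replicate_not_of_mem {b : Bool} {p : List Bool} (hb : b ∈ p) :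
    ∃ q i, p = q ++ b :: List.replicate i (!b) := by
  obtain ⟨s, t, hst, hs⟩ := List.eq_append_cons_of_mem (List.mem_reverse.2 hb)
  refine ⟨t.reverse, s.length, ?_⟩
  have : s = List.replicate s.length (!b) :=
    List.eq_replicate_iff.2 ⟨rfl, fun c hc => Bool.eq_not.2 fun h => hs (h ▸ hc)⟩
  rw [← List.reverse_reverse p, hst, this]
  simp

lemma append_cons_replicate_inj_right {α : Type*} {a b : α} (hab : a ≠ b) {p q : List α} {i j : ℕ}
    (h : p ++ a :: List.replicate i b = q ++ a :: List.replicate j b) : i = j := by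
  classical
  have length_takeWhile (l : List α) (k : ℕ) :
      ((l ++ a :: List.replicate k b).reverse.takeWhile (· = b)).length = k := by
    simp [List.takeWhile_append_of_pos, hab]
  rw [← length_takeWhile p i, h, length_takeWhile]

lemma isBallot_concat_iff {p : List Bool} {b : Bool} :
    IsBallot (p ++ [b]) ↔
      IsBallot p ∧ (p ++ [b]).count false ≤ (p ++ [b]).count true := by
  simp only [IsBallot, List.prefix_concat_iff, forall_eq_or_imp]
  exact and_comm

lemma IsBallot.count_false_le {p : List Bool} (hp : IsBallot p) : p.count false ≤ p.count true :=
  hp p List.prefix_rfl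

lemma isBallot_append_replicate_false_iff {p : List Bool} {i : ℕ} :
    IsBallot (p ++ List.replicate i false) ↔ IsBallot p ∧ p.count false + i ≤ p.count true := by
  induction i with
  | zero => simpa using IsBallot.count_false_le
  | succ i ih =>
    rw [List.replicate_succ', ← List.append_assoc, isBallot_concat_iff, ih]
    grind

lemma isBallot_append_true_cons_replicate_false_iff {p : List Bool} {i : ℕ} :
    IsBallot (p ++ true :: List.replicate i false) ↔
      IsBallot p ∧ p.count false + i ≤ p.count true + 1 := by
  rw [List.append_cons, isBallot_append_replicate_false_iff, isBallot_concat_iff]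
  grind [IsBallot.count_false_le]

/-- The ballot words with `n` east-steps and `m` north-steps that contain no `r` consecutive
letters `b`; `b = true` gives the words counted by `tCount`, `b = false` those counted by
`sCount`. -/
def ballotWords (b : Bool) (r n m : ℕ) : Set (List Bool) :=
  {p | p.count false = n ∧ p.count true = m ∧ IsBallot p ∧ ¬ List.replicate r b <:+: p}

lemma tCount_eq_ncard_ballotWords (r n m : ℕ) : tCount r n m = (ballotWords true r n m).ncard :=
  rfl

lemma sCount_eq_ncard_ballotWords (r n m : ℕ) : sCount r n m = (ballotWords false r n m).ncard :=
  rfl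

lemma finite_ballotWords (b : Bool) (r n m : ℕ) : (ballotWords b r n m).Finite := by
  refine (List.finite_length_eq Bool (n + m)).subset ?_
  rintro p ⟨rfl, rfl, -⟩
  exact (List.count_false_add_count_true p).symm

lemma append_true_cons_replicate_false_mem_ballotWords_iff {r i j m : ℕ} {p : List Bool} :
    p ++ true :: List.replicate i false ∈ ballotWords false r (i + j) (m + 1) ↔
      i < r ∧ i + j ≤ m + 1 ∧ p ∈ ballotWords false r j m := by
  have run_iff : List.replicate r false <:+: p ++ true :: List.replicate i false ↔
      List.replicate r false <:+: p ∨ r ≤ i := by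
    rw [replicate_infix_append_cons_iff (by decide), List.infix_replicate_iff]
    simp
  simp only [ballotWords, Set.mem_ofPred_eq, isBallot_append_true_cons_replicate_false_iff, run_iff]
  grind

lemma ballotWords_false_succ {r n m : ℕ} (hnm : n ≤ m + 1) :
    ballotWords false r n (m + 1) =
      ⋃ ij ∈ {ij ∈ antidiagonal n | ij.1 < r},
        (· ++ true :: List.replicate ij.1 false) '' ballotWords false r ij.2 m := by
  ext p
  simp only [Finset.mem_filter, mem_antidiagonal, Set.mem_iUnion, Set.mem_image, exists_prop,
    Prod.exists]
  constructor
  · intro hp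
    have true_mem : true ∈ p := List.count_pos_iff.1 (by rw [hp.2.1]; omega)
    obtain ⟨q, i, rfl⟩ := eq_append_cons_replicate_not_of_mem true_mem
    have hi : i ≤ n := by simp [← hp.1]
    obtain ⟨j, rfl⟩ := Nat.exists_eq_add_of_le hi
    obtain ⟨hir, -, hq⟩ := append_true_cons_replicate_false_mem_ballotWords_iff.1 hp
    exact ⟨i, j, ⟨rfl, hir⟩, q, hq, rfl⟩
  · rintro ⟨i, j, ⟨rfl, hir⟩, q, hq, rfl⟩
    exact append_true_cons_replicate_false_mem_ballotWords_iff.2 ⟨hir, hnm, hq⟩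

lemma pairwiseDisjoint_image_append_true_cons_replicate_false (n : ℕ)
    (W : ℕ × ℕ → Set (List Bool)) :
    (antidiagonal n : Set (ℕ × ℕ)).PairwiseDisjoint
      fun ij => (· ++ true :: List.replicate ij.1 false) '' W ij := by
  intro ij hij kl hkl hne
  refine Set.disjoint_left.2 ?_
  rintro _ ⟨p, -, rfl⟩ ⟨q, -, hqp⟩
  have fst_eq : kl.1 = ij.1 := append_cons_replicate_inj_right (by decide) hqp
  simp only [Finset.mem_coe, mem_antidiagonal] at hij hkl
  exact hne (Prod.ext fst_eq.symm (by omega))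

lemma sCount_succ {r n m : ℕ} (hnm : n ≤ m + 1) :
    sCount r n (m + 1) = ∑ ij ∈ antidiagonal n with ij.1 < r, sCount r ij.2 m := by
  have ncard_biUnion := Set.Finite.ncard_biUnion
    (Finset.finite_toSet {ij ∈ antidiagonal n | ij.1 < r})
    (fun ij _ => (finite_ballotWords false r ij.2 m).image (· ++ true :: List.replicate ij.1 false))
    ((pairwiseDisjoint_image_append_true_cons_replicate_false n _).subset
      (Finset.coe_subset.2 (Finset.filter_subset _ _)))
  simp only [Finset.mem_coe] at ncard_biUnion
  rw [sCount_eq_ncard_ballotWords, ballotWords_false_succ hnm, ncard_biUnion,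
    finsum_mem_finset_eq_sum]
  exact Finset.sum_congr rfl fun ij _ =>
    Set.ncard_image_of_injective _ (List.append_left_injective _)

lemma sCount_zero_zero (r : ℕ) : sCount r 0 0 = if 0 < r then 1 else 0 := by
  have : ballotWords false r 0 0 = {p | p = [] ∧ 0 < r} := by
    ext p
    constructor
    · rintro ⟨hfalse, htrue, -, hrun⟩
      have length_eq := List.count_false_add_count_true p
      refine ⟨List.eq_nil_of_length_eq_zero (by omega), Nat.pos_of_ne_zero ?_⟩
      rintro rfl
      exact hrun List.nil_infix
    · rintro ⟨rfl, hr⟩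
      simp [ballotWords, IsBallot, hr.ne']
  rw [sCount_eq_ncard_ballotWords, this]
  split_ifs with hr <;> simp [hr]

lemma sCount_eq_zero_of_lt {r n m : ℕ} (hmn : m < n) : sCount r n m = 0 := by
  have : ballotWords false r n m = ∅ := by
    refine Set.eq_empty_of_forall_notMem ?_
    rintro p ⟨rfl, rfl, hp, -⟩
    exact hmn.not_ge hp.count_false_le
  rw [sCount_eq_ncard_ballotWords, this, Set.ncard_empty]

theorem succ_mul_sCount {r n m : ℕ} (hnm : n ≤ m + 1) :
    ((m : ℤ) + 1) * sCount r n m = (m + 1 - n) * eulerCoeff r (m + 1) n := by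
  have := succ_mul_eq_sub_mul_coeff_pow_succ
    ((∑ i ∈ Finset.range r, (Polynomial.X : Polynomial ℤ) ^ i : Polynomial ℤ) : PowerSeries ℤ)
    (fun n m => sCount r n m) ?_ ?_ ?_ hnm
  · rwa [← Polynomial.coe_pow, Polynomial.coeff_coe] at this
  · rw [sCount_zero_zero, Polynomial.coeff_coe, coeff_sum_range_X_pow, Nat.cast_ite, Nat.cast_one,
      Nat.cast_zero]
  · exact fun m => mod_cast sCount_eq_zero_of_lt m.lt_succ_self
  · intro n m hnm
    simp only [sCount_succ hnm, Polynomial.coeff_coe, coeff_sum_range_X_pow, boole_mul,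
      Finset.sum_filter, Nat.cast_sum, Nat.cast_ite, Nat.cast_zero]

/-- The path read backwards with the two kinds of steps exchanged: up to translation, its reflection
in a line `x + y = const`. -/
def mirror (p : List Bool) : List Bool :=
  (p.map not).reverse

lemma mirror_involutive : Function.Involutive mirror := fun p => by
  simp [mirror, Function.comp_def]

lemma mirror_append (p q : List Bool) : mirror (p ++ q) = mirror q ++ mirror p := by
  simp [mirror]

lemma count_mirror (p : List Bool) (b : Bool) : (mirror p).count b = p.count (!b) := by
  simpa [mirror] using List.count_map_of_injective p not Bool.not_injective (!b)

lemma isBallot_mirror {p : List Bool} (hp : IsBallot p) (hcount : p.count false = p.count true) :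
    IsBallot (mirror p) := by
  rintro q ⟨s, hs⟩
  obtain rfl : p = mirror s ++ mirror q := by
    rw [← mirror_append, hs, mirror_involutive]
  have := hp (mirror s) (List.prefix_append _ _)
  simp only [List.count_append, count_mirror, Bool.not_true, Bool.not_false] at this hcount
  omega

lemma mirror_infix_mirror {p q : List Bool} (h : p <:+: q) : mirror p <:+: mirror q :=
  List.reverse_infix.2 (h.map not)

lemma mirror_replicate (r : ℕ) (b : Bool) :
    mirror (List.replicate r b) = List.replicate r (!b) := by
  simp [mirror]

lemma mirror_mem_ballotWords {b : Bool} {r n : ℕ} {p : List Bool} (hp : p ∈ ballotWords b r n n) :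
    mirror p ∈ ballotWords (!b) r n n := by
  obtain ⟨hfalse, htrue, hballot, hrun⟩ := hp
  refine ⟨by simpa [count_mirror], by simpa [count_mirror], isBallot_mirror hballot (by omega), ?_⟩
  refine fun h => hrun ?_
  simpa [mirror_replicate, mirror_involutive p] using mirror_infix_mirror h

theorem tCount_self_eq_sCount_self (r n : ℕ) : tCount r n n = sCount r n n := by
  have mirror_bijOn : Set.BijOn mirror (ballotWords true r n n) (ballotWords false r n n) :=
    Set.InvOn.bijOn ⟨fun p _ => mirror_involutive p, fun p _ => mirror_involutive p⟩
      (fun _ => mirror_mem_ballotWords) (fun _ => mirror_mem_ballotWords)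
  rw [tCount_eq_ncard_ballotWords, sCount_eq_ncard_ballotWords, mirror_bijOn.ncard_eq]

lemma concat_false_mem_ballotWords_true_iff {r n m : ℕ} {p : List Bool} :
    p ++ [false] ∈ ballotWords true r (n + 1) m ↔ n < m ∧ p ∈ ballotWords true r n m := by
  have run_iff : List.replicate r true <:+: p ++ [false] ↔ List.replicate r true <:+: p := by
    rw [replicate_infix_append_cons_iff (by decide), or_iff_left_of_imp]
    exact fun h => h.trans List.nil_infix
  simp only [ballotWords, Set.mem_ofPred_eq, isBallot_concat_iff, run_iff]
  grind

lemma exists_eq_concat_false_of_isBallot {p : List Bool} (hp : IsBallot p) (hne : p ≠ [])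
    (hcount : p.count false = p.count true) : ∃ q, p = q ++ [false] := by
  obtain ⟨q, b, rfl⟩ := (List.eq_nil_or_concat' p).resolve_left hne
  have := hp q (List.prefix_append _ _)
  cases b with
  | false => exact ⟨q, rfl⟩
  | true => grind

theorem tCount_succ_self (r n : ℕ) : tCount r (n + 1) (n + 1) = tCount r n (n + 1) := by
  have concat_false_bijOn :
      Set.BijOn (· ++ [false]) (ballotWords true r n (n + 1))
        (ballotWords true r (n + 1) (n + 1)) := by
    refine ⟨fun q hq => concat_false_mem_ballotWords_true_iff.2 ⟨n.lt_succ_self, hq⟩,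
      (List.append_left_injective _).injOn, fun p hp => ?_⟩
    obtain ⟨q, rfl⟩ := exists_eq_concat_false_of_isBallot hp.2.2.1
      (by rintro rfl; simp [ballotWords] at hp) (hp.1.trans hp.2.1.symm)
    exact ⟨q, (concat_false_mem_ballotWords_true_iff.1 hp).2, rfl⟩
  rw [tCount_eq_ncard_ballotWords, tCount_eq_ncard_ballotWords, concat_false_bijOn.ncard_eq]

theorem diag_counts_agree (r : ℕ) (hr : 1 ≤ r) (n : ℕ) (hn : 1 ≤ n) :
    tCount r n n = sCount r n n ∧
    ((n : ℤ) + 1) * tCount r n n = eulerCoeff r (n + 1) n ∧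
    tCount r n n = tCount r (n - 1) n := by
  have t_eq_s := tCount_self_eq_sCount_self r n
  refine ⟨t_eq_s, ?_, ?_⟩
  · simpa [t_eq_s] using succ_mul_sCount (r := r) n.le_succ
  · obtain ⟨k, rfl⟩ := Nat.exists_eq_add_of_le' hn
    exact tCount_succ_self r k
end
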